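/- Let (W,R) be a Coxeter system with R finite, and let s, s' be R-reflections such that the subgroup ⟨s,s'⟩ they generate is finite. Then there exist r, r' ∈ R generating a finite subgroup and an element w ∈ W such that w⟨s,s'⟩w⁻¹ is contained in ⟨r,r'⟩. -/

import Mathlib

variable {B : Type*} {W : Type*} [Group W] {M : CoxeterMatrix B}

/-- A subset `J` of the index set is *spherical* if the corresponding simple reflections
generate a finite subgroup. -/
def Spherical (cs : CoxeterSystem M W) (J : Set B) : Prop :=
  (Subgroup.closure (cs.simple '' J) : Set W).Finite

/-- Two indices are *adjacent* if the corresponding simple reflections generate a finite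
subgroup. -/
def Adjacent (cs : CoxeterSystem M W) (i j : B) : Prop :=
  (Subgroup.closure {cs.simple i, cs.simple j} : Set W).Finite

/-- A subset is *2-spherical* if every pair of its elements is adjacent. -/
def TwoSpherical (cs : CoxeterSystem M W) (J : Set B) : Prop :=
  ∀ i ∈ J, ∀ j ∈ J, Adjacent cs i j

/-- A subset is *irreducible* if it cannot be partitioned into two nonempty subsets whose
corresponding simple reflections commute elementwise. -/
def IrreducibleSubset (cs : CoxeterSystem M W) (J : Set B) : Prop :=
  ¬ ∃ K L : Set B, K.Nonempty ∧ L.Nonempty ∧ Disjoint K L ∧ K ∪ L = J ∧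
      ∀ k ∈ K, ∀ l ∈ L, Commute (cs.simple k) (cs.simple l)

/-- `perpIn cs T J` is the set `J⊥` of elements of `T ∖ J` whose simple reflections commute
with those of every element of `J`. -/
def perpIn (cs : CoxeterSystem M W) (T J : Set B) : Set B :=
  {i ∈ T \ J | ∀ j ∈ J, Commute (cs.simple i) (cs.simple j)}

/-- A subset `T` of the index set is *connected* if any two of its elements are joined by a
path inside `T` whose edges are adjacent pairs. -/
def ConnectedIn (cs : CoxeterSystem M W) (T : Set B) : Prop :=
  ∀ a ∈ T, ∀ b ∈ T,
    Relation.ReflTransGen (fun x y => x ∈ T ∧ y ∈ T ∧ Adjacent cs x y) a b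

/-- A subset `T` is *twist-rigid* if for every irreducible spherical subset `L ⊆ T` the set
`T ∖ (L ∪ L⊥)` is connected, where `L⊥` is taken inside `T`. -/
def TwistRigidIn (cs : CoxeterSystem M W) (T : Set B) : Prop :=
  ∀ L ⊆ T, IrreducibleSubset cs L → Spherical cs L →
    ConnectedIn cs (T \ (L ∪ perpIn cs T L))

/-- A pair `(s, w)` is a *base* if `ℓ(w⁻¹ s w) = 2 ℓ(w) + 1` and every reflection `t` with
`ℓ(t w) < ℓ(w)` generates together with `s` a finite subgroup. -/
def IsBase (cs : CoxeterSystem M W) (s : B) (w : W) : Prop :=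
  cs.length (w⁻¹ * cs.simple s * w) = 2 * cs.length w + 1 ∧
    ∀ t : W, cs.IsReflection t → cs.length (t * w) < cs.length w →
      (Subgroup.closure {cs.simple s, t} : Set W).Finite

/-- `J` is the *support* of `(s, w)` if it is the smallest subset of the index set containing
`s` with `w ∈ W_J`. -/
def IsSupport (cs : CoxeterSystem M W) (s : B) (w : W) (J : Set B) : Prop :=
  s ∈ J ∧ w ∈ Subgroup.closure (cs.simple '' J) ∧
    ∀ J' : Set B, s ∈ J' → w ∈ Subgroup.closure (cs.simple '' J') → J ⊆ J'

/-- A base `(s, w)` is *simple* if `w` is represented by a reduced word whose letters are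
pairwise distinct and distinct from `s`. -/
def IsSimpleBase (cs : CoxeterSystem M W) (s : B) (w : W) : Prop :=
  IsBase cs s w ∧ ∃ l : List B, w = cs.wordProd l ∧ cs.length w = l.length ∧
    l.Nodup ∧ s ∉ l

/-- The *shadow* of a base `(s, w)` with support `J`: the set of `j ∈ J` with
`ℓ((wj)⁻¹ s (wj)) ≤ ℓ(w⁻¹ s w)`. -/
def shadow (cs : CoxeterSystem M W) (s : B) (w : W) (J : Set B) : Set B :=
  {j ∈ J | cs.length ((w * cs.simple j)⁻¹ * cs.simple s * (w * cs.simple j)) ≤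
    cs.length (w⁻¹ * cs.simple s * w)}

set_option linter.unusedSectionVars false

namespace GeomRep
open Matrix

section
variable [Fintype B] [DecidableEq B]

/-- Twice the Gram matrix of the canonical form. -/
noncomputable def gram (M : CoxeterMatrix B) : Matrix B B ℝ :=
  fun i j => -2 * Real.cos (Real.pi / M i j)

/-- The simple roots. -/
def sr (i : B) : B → ℝ := Pi.single i 1

noncomputable def gf (M : CoxeterMatrix B) (i : B) : (B → ℝ) →ₗ[ℝ] ℝ :=
  (LinearMap.proj i).comp (gram M).mulVecLin

noncomputable def gs (M : CoxeterMatrix B) (i : B) : Module.End ℝ (B → ℝ) :=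
  LinearMap.id - (gf M i).smulRight (sr i)

lemma gf_apply (i : B) (v : B → ℝ) : gf M i v = (gram M *ᵥ v) i := rfl

lemma gs_apply (i : B) (v : B → ℝ) : gs M i v = v - gf M i v • sr i := rfl

lemma gf_sr (i j : B) : gf M i (sr j) = -2 * Real.cos (Real.pi / M i j) := by
  simp [gf_apply, sr, gram]

lemma gf_sr_self (i : B) : gf M i (sr i) = 2 := by
  simp [gf_sr]

lemma gs_sr_self (i : B) : gs M i (sr i) = - sr i := by
  rw [gs_apply, gf_sr_self]; module

lemma gs_gs (i : B) (v : B → ℝ) : gs M i (gs M i v) = v := by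
  rw [gs_apply i (gs M i v), gs_apply, map_sub, map_smul, gf_sr_self, smul_eq_mul]; module

lemma gram_symm : (gram M)ᵀ = gram M := by
  ext i j; simp [gram, M.symmetric i j]

noncomputable def Q (M : CoxeterMatrix B) (v : B → ℝ) : ℝ := v ⬝ᵥ (gram M *ᵥ v)

lemma Q_sr (i : B) : Q M (sr i) = 2 := by
  simp [Q, sr, gram]

lemma Q_gs (i : B) (v : B → ℝ) : Q M (gs M i v) = Q M v := by
  have h1 : sr i ⬝ᵥ (gram M *ᵥ v) = gf M i v := by simp [sr, gf_apply]
  have h2 : v ⬝ᵥ (gram M *ᵥ sr i) = gf M i v := by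
    rw [dotProduct_mulVec, ← mulVec_transpose, gram_symm, dotProduct_comm, h1]
  have h3 : sr i ⬝ᵥ (gram M *ᵥ sr i) = 2 := Q_sr i
  simp only [Q, gs_apply, mulVec_sub, mulVec_smul, sub_dotProduct, dotProduct_sub,
    smul_dotProduct, dotProduct_smul, h1, h2, h3, smul_eq_mul]
  ring

lemma Q_smul (c : ℝ) (v : B → ℝ) : Q M (c • v) = c ^ 2 * Q M v := by
  simp only [Q, mulVec_smul, smul_dotProduct, dotProduct_smul, smul_eq_mul]; ring

lemma gs_sr (i j : B) : gs M i (sr j) = sr j + (2 * Real.cos (Real.pi / M i j)) • sr i := by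
  rw [gs_apply, gf_sr]; module

lemma sin_rec (θ x : ℝ) : Real.sin (x + θ) = 2 * Real.cos θ * Real.sin x - Real.sin (x - θ) := by
  rw [Real.sin_add, Real.sin_sub]; ring

lemma pow_sr (i j : B) (n : ℕ) :
    Real.sin (Real.pi / M i j) • ((gs M i * gs M j) ^ n) (sr i) =
      Real.sin ((2 * n + 1) * (Real.pi / M i j)) • sr i
        + Real.sin ((2 * n) * (Real.pi / M i j)) • sr j := by
  induction n with
  | zero => simp
  | succ n ih =>
    rw [pow_succ', Module.End.mul_apply, ← map_smul, ih]
    simp only [map_add, map_smul, Module.End.mul_apply, gs_sr_self, gs_sr, map_neg]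
    rw [M.symmetric j i]
    set θ := Real.pi / (M i j : ℝ)
    have e1 := sin_rec θ ((2 * n + 1) * θ)
    have e2 := sin_rec θ ((2 * (n + 1 : ℕ)) * θ)
    push_cast at e2 ⊢
    rw [show (2 * (n:ℝ) + 1) * θ + θ = 2 * (n + 1) * θ by ring,
      show (2 * (n:ℝ) + 1) * θ - θ = 2 * n * θ by ring] at e1
    rw [show 2 * ((n:ℝ) + 1) * θ + θ = (2 * (n + 1) + 1) * θ by ring,
      show 2 * ((n:ℝ) + 1) * θ - θ = (2 * n + 1) * θ by ring] at e2
    rw [e2, e1]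
    module

lemma pow_sr' (i j : B) (n : ℕ) :
    Real.sin (Real.pi / M i j) • ((gs M i * gs M j) ^ n) (sr j) =
      - (Real.sin ((2 * n) * (Real.pi / M i j)) • sr i
        + Real.sin ((2 * n - 1) * (Real.pi / M i j)) • sr j) := by
  induction n with
  | zero => simp
  | succ n ih =>
    rw [pow_succ', Module.End.mul_apply, ← map_smul, ih]
    simp only [map_add, map_smul, Module.End.mul_apply, gs_sr_self, gs_sr, map_neg]
    rw [M.symmetric j i]
    set θ := Real.pi / (M i j : ℝ)
    have e1 := sin_rec θ ((2 * n) * θ)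
    have e2 := sin_rec θ ((2 * n + 1) * θ)
    push_cast at e2 ⊢
    rw [show (2 * (n:ℝ) + 1) * θ + θ = 2 * (n + 1) * θ by ring,
      show (2 * (n:ℝ) + 1) * θ - θ = 2 * n * θ by ring] at e2
    rw [show (2 * (n:ℝ)) * θ + θ = (2 * n + 1) * θ by ring,
      show 2 * (n:ℝ) * θ - θ = (2 * n - 1) * θ by ring] at e1
    rw [e2, show (2 * ((n:ℝ) + 1) - 1) * θ = (2 * n + 1) * θ by ring, e1]
    module

lemma sin_pos_of_two_le {m : ℕ} (h : 2 ≤ m) : 0 < Real.sin (Real.pi / m) := by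
  have h' : (2:ℝ) ≤ m := by exact_mod_cast h
  apply Real.sin_pos_of_pos_of_lt_pi
  · have := Real.pi_pos; positivity
  · rw [div_lt_iff₀ (by linarith)]; nlinarith [Real.pi_pos]

lemma liftable : M.IsLiftable (gs M) := by
  intro i j
  rcases eq_or_ne i j with rfl | hij
  · rw [M.diagonal, pow_one]; ext1 v
    ext1
    simp [gs_gs]
  rcases Nat.eq_zero_or_pos (M i j) with h0 | hpos
  · rw [h0, pow_zero]
  have h2 : 2 ≤ M i j := by
    have := M.off_diagonal i j hij
    omega
  have hs := sin_pos_of_two_le h2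
  set m := M i j with hm
  have hmR : (m : ℝ) ≠ 0 := by positivity
  set g := (gs M i * gs M j) ^ m with hg
  have hi : g (sr i) = sr i := by
    have := pow_sr (M := M) i j m
    rw [← hm, ← hg, show (2 * (m:ℝ) + 1) * (Real.pi / m) = Real.pi / m + 2 * Real.pi by
      field_simp; ring, show (2 * (m:ℝ)) * (Real.pi / m) = 2 * Real.pi by field_simp,
      Real.sin_add_two_pi, Real.sin_two_pi, zero_smul, add_zero] at this
    exact smul_right_injective _ hs.ne' this
  have hj : g (sr j) = sr j := by
    have := pow_sr' (M := M) i j m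
    rw [← hm, ← hg, show (2 * (m:ℝ) - 1) * (Real.pi / m) = - (Real.pi / m) + 2 * Real.pi by
      field_simp; ring, show (2 * (m:ℝ)) * (Real.pi / m) = 2 * Real.pi by field_simp,
      Real.sin_add_two_pi, Real.sin_two_pi, zero_smul, zero_add, Real.sin_neg, neg_smul, neg_neg] at this
    exact smul_right_injective _ hs.ne' this
  have hperp : ∀ v, gf M i v = 0 → gf M j v = 0 → g v = v := by
    intro v h1 h2
    have h3 : (gs M i * gs M j) v = v := by
      rw [Module.End.mul_apply, gs_apply j, h2, gs_apply i, zero_smul, sub_zero, h1]; simp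
    have : ∀ n : ℕ, ((gs M i * gs M j) ^ n) v = v := by
      intro n
      induction n with
      | zero => simp
      | succ n ih => rw [pow_succ', Module.End.mul_apply, ih, h3]
    exact this m
  refine LinearMap.ext fun v => ?_
  set k := 2 * Real.cos (Real.pi / m) with hk
  have hdet : 4 - k ^ 2 ≠ 0 := by
    have := Real.sin_sq_add_cos_sq (Real.pi / m)
    have h5 : 4 - k ^ 2 = 4 * Real.sin (Real.pi / m) ^ 2 := by rw [hk]; linarith
    rw [h5]; positivity
  set a := (2 * gf M i v + k * gf M j v) / (4 - k ^ 2) with ha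
  set b := (k * gf M i v + 2 * gf M j v) / (4 - k ^ 2) with hb
  have e1 : gf M i (v - a • sr i - b • sr j) = 0 := by
    simp only [map_sub, map_smul, gf_sr_self, gf_sr, smul_eq_mul, ← hm]
    rw [show -2 * Real.cos (Real.pi / m) = -k by rw [hk]; ring, ha, hb]
    field_simp; ring
  have e2 : gf M j (v - a • sr i - b • sr j) = 0 := by
    simp only [map_sub, map_smul, gf_sr_self, gf_sr, smul_eq_mul, M.symmetric j i, ← hm]
    rw [show -2 * Real.cos (Real.pi / m) = -k by rw [hk]; ring, ha, hb]
    field_simp; ring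
  have := hperp _ e1 e2
  rw [map_sub, map_sub, map_smul, map_smul, hi, hj] at this
  simpa using this

lemma exists_seq (m : ℕ) (hm : m ≠ 1) : ∃ c : ℕ → ℝ, c 0 = 0 ∧ c 1 = 1 ∧
    (∀ k, c (k + 2) = 2 * Real.cos (Real.pi / m) * c (k + 1) - c k) ∧
    ∀ k, (m = 0 ∨ k ≤ m) → 0 ≤ c k := by
  rcases Nat.eq_zero_or_pos m with rfl | hpos
  · refine ⟨fun k => k, by simp, by simp, ?_, ?_⟩
    · intro k; simp; ring
    · intro k _; positivity
  have h2 : 2 ≤ m := by omega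
  have hs := sin_pos_of_two_le h2
  refine ⟨fun k => Real.sin (k * (Real.pi / m)) / Real.sin (Real.pi / m), by simp, ?_, ?_, ?_⟩
  · simp [hs.ne']
  · intro k
    have := sin_rec (Real.pi / m) ((k + 1) * (Real.pi / m))
    push_cast
    rw [show ((k:ℝ) + 2) * (Real.pi / m) = (k + 1) * (Real.pi / m) + Real.pi / m by ring, this]
    rw [show ((k:ℝ) + 1) * (Real.pi / m) - Real.pi / m = k * (Real.pi / m) by ring]
    ring
  · intro k hk
    have hk : k ≤ m := by omega
    apply div_nonneg _ hs.le
    apply Real.sin_nonneg_of_nonneg_of_le_pi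
    · have := Real.pi_pos; positivity
    · have : (k:ℝ) ≤ m := by exact_mod_cast hk
      have h0 : (0:ℝ) < m := by exact_mod_cast hpos
      rw [← mul_div_assoc, div_le_iff₀ h0]; nlinarith [Real.pi_pos]

noncomputable def rho (cs : CoxeterSystem M W) : W →* Module.End ℝ (B → ℝ) :=
  cs.lift ⟨gs M, liftable⟩

lemma rho_simple (cs : CoxeterSystem M W) (i : B) : rho cs (cs.simple i) = gs M i :=
  cs.lift_apply_simple liftable i

lemma rho_mul (cs : CoxeterSystem M W) (u w : W) (v : B → ℝ) :
    rho cs (u * w) v = rho cs u (rho cs w v) := by rw [map_mul]; rfl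

lemma rho_inv_self (cs : CoxeterSystem M W) (u : W) (v : B → ℝ) :
    rho cs u⁻¹ (rho cs u v) = v := by rw [← rho_mul]; simp

lemma rho_self_inv (cs : CoxeterSystem M W) (u : W) (v : B → ℝ) :
    rho cs u (rho cs u⁻¹ v) = v := by rw [← rho_mul]; simp

lemma Q_rho (cs : CoxeterSystem M W) (u : W) (v : B → ℝ) : Q M (rho cs u v) = Q M v := by
  induction u using cs.simple_induction_left with
  | one => simp
  | mul_simple_left w i h => rw [rho_mul, rho_simple, Q_gs, h]


lemma rho_alt (cs : CoxeterSystem M W) (s t : B) (c : ℕ → ℝ) (h0 : c 0 = 0) (h1 : c 1 = 1)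
    (hc : ∀ k, c (k + 2) = 2 * Real.cos (Real.pi / M s t) * c (k + 1) - c k) (k : ℕ) :
    rho cs (cs.wordProd (CoxeterSystem.alternatingWord s t k)) (sr s) =
      if Even k then c (k + 1) • sr s + c k • sr t else c k • sr s + c (k + 1) • sr t := by
  induction k with
  | zero => simp [CoxeterSystem.alternatingWord, h0, h1]
  | succ k ih =>
    rw [CoxeterSystem.alternatingWord_succ', cs.wordProd_cons, rho_mul, ih, rho_simple, hc k]
    by_cases hk : Even k
    · have hk' : ¬ Even (k + 1) := by simpa [Nat.even_add_one] using hk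
      simp only [hk, hk', if_true, if_false, map_add, map_smul, gs_sr_self, gs_sr,
        M.symmetric t s]
      module
    · have hk' : Even (k + 1) := by simpa [Nat.even_add_one] using hk
      simp only [hk, hk', if_true, if_false, map_add, map_smul, gs_sr_self, gs_sr]
      module

lemma sr_nonneg (i : B) : 0 ≤ (sr i : B → ℝ) := by
  rw [sr, Pi.single_nonneg]; exact zero_le_one

lemma rho_nonneg (cs : CoxeterSystem M W) (n : ℕ) : ∀ (w : W) (s : B), cs.length w = n →
    cs.length w < cs.length (w * cs.simple s) → 0 ≤ rho cs w (sr s) := by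
  induction n using Nat.strong_induction_on with
  | _ n IH =>
  intro w s hw hs
  by_cases hw1 : w = 1
  · subst hw1; simpa using sr_nonneg s
  obtain ⟨t, ht⟩ := cs.exists_rightDescent_of_ne_one hw1
  have hst : s ≠ t := by
    rintro rfl
    exact absurd ht (by unfold CoxeterSystem.IsRightDescent; omega)
  let P : ℕ → Prop := fun k => ∃ v, w = v * cs.wordProd (CoxeterSystem.alternatingWord s t k) ∧
    cs.length w = cs.length v + k
  have hP1 : P 1 := by
    refine ⟨w * cs.simple t, ?_, ?_⟩
    · simp [CoxeterSystem.alternatingWord]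
    · rw [CoxeterSystem.isRightDescent_iff] at ht; omega
  have hbd : ∀ k, P k → k ≤ n := by rintro k ⟨v, -, h⟩; omega
  classical
  obtain ⟨k, hk1, hPk, hmax⟩ : ∃ k, 1 ≤ k ∧ P k ∧ ¬ P (k + 1) := by
    have hn1 : 1 ≤ n := hbd 1 hP1
    refine ⟨Nat.findGreatest P n, Nat.le_findGreatest hn1 hP1,
      Nat.findGreatest_spec hn1 hP1, fun h => ?_⟩
    have := Nat.le_findGreatest (hbd _ h) h
    omega
  obtain ⟨v, hv, hlv⟩ := hPk
  have hle : ∀ k, cs.length (cs.wordProd (CoxeterSystem.alternatingWord s t k)) ≤ k := by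
    intro k
    simpa using cs.length_wordProd_le (CoxeterSystem.alternatingWord s t k)
  -- first letter
  have hA : ∀ u, u = (if Even k then t else s) → cs.length v < cs.length (v * cs.simple u) := by
    intro u hu
    rcases cs.length_mul_simple v u with h | h
    · omega
    · exfalso
      apply hmax
      refine ⟨v * cs.simple u, ?_, by omega⟩
      rw [CoxeterSystem.alternatingWord_succ', cs.wordProd_cons, ← hu, hv]
      simp [mul_assoc]
  have hB : ∀ u, u = (if Even k then s else t) → cs.length v < cs.length (v * cs.simple u) := by
    intro u hu
    rcases cs.length_mul_simple v u with h | h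
    · omega
    · exfalso
      obtain ⟨k, rfl⟩ : ∃ k', k = k' + 1 := ⟨k - 1, by omega⟩
      have hu' : u = (if Even k then t else s) := by
        rw [hu]; by_cases hk : Even k <;> simp [hk, Nat.even_add_one]
      rw [CoxeterSystem.alternatingWord_succ', cs.wordProd_cons, ← hu', ← mul_assoc] at hv
      have h1 := cs.length_mul_le (v * cs.simple u)
        (cs.wordProd (CoxeterSystem.alternatingWord s t k))
      rw [← hv] at h1
      have := hle k
      omega
  have hvs : 0 ≤ rho cs v (sr s) := by
    apply IH (cs.length v) (by omega) v s rfl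
    by_cases hk : Even k
    · exact hB s (by simp [hk])
    · exact hA s (by simp [hk])
  have hvt : 0 ≤ rho cs v (sr t) := by
    apply IH (cs.length v) (by omega) v t rfl
    by_cases hk : Even k
    · exact hA t (by simp [hk])
    · exact hB t (by simp [hk])
  have hkm : M s t = 0 ∨ k + 1 ≤ M s t := by
    by_contra! hcon
    obtain ⟨hm0, hlt⟩ := hcon
    have hnr := cs.not_isReduced_alternatingWord t s (m := k + 1)
      (by rwa [M.symmetric t s]) (by rw [M.symmetric t s]; exact hlt)
    have hprod : cs.wordProd (CoxeterSystem.alternatingWord t s (k + 1)) =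
      cs.wordProd (CoxeterSystem.alternatingWord s t k) * cs.simple s := by
      rw [CoxeterSystem.alternatingWord_succ, cs.wordProd_concat]
    have hl1 : cs.length (cs.wordProd (CoxeterSystem.alternatingWord t s (k + 1))) ≤ k + 1 := by
      simpa using cs.length_wordProd_le (CoxeterSystem.alternatingWord t s (k + 1))
    have hl2 : cs.length (cs.wordProd (CoxeterSystem.alternatingWord t s (k + 1))) ≠ k + 1 := by
      intro h; apply hnr; unfold CoxeterSystem.IsReduced; simpa using h
    have h3 := cs.length_mul_le v (cs.wordProd (CoxeterSystem.alternatingWord t s (k + 1)))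
    rw [hprod, ← mul_assoc, ← hv, ← hprod] at h3
    omega
  obtain ⟨c, h0, h1, hc, hpos⟩ := exists_seq (M s t) (M.off_diagonal s t hst)
  have hck : 0 ≤ c k := hpos k (by omega)
  have hck1 : 0 ≤ c (k + 1) := hpos (k + 1) (by omega)
  rw [hv, rho_mul, rho_alt cs s t c h0 h1 hc]
  split_ifs
  · rw [map_add, map_smul, map_smul]
    exact add_nonneg (smul_nonneg hck1 hvs) (smul_nonneg hck hvt)
  · rw [map_add, map_smul, map_smul]
    exact add_nonneg (smul_nonneg hck hvs) (smul_nonneg hck1 hvt)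

lemma rho_nonpos (cs : CoxeterSystem M W) (w : W) (s : B)
    (h : cs.length (w * cs.simple s) < cs.length w) : rho cs w (sr s) ≤ 0 := by
  have := rho_nonneg cs _ (w * cs.simple s) s rfl (by simpa using h)
  rw [rho_mul, rho_simple, gs_sr_self, map_neg] at this
  simpa using this

def IsRt (cs : CoxeterSystem M W) (β : B → ℝ) : Prop := ∃ w i, β = rho cs w (sr i)

lemma IsRt.rho {cs : CoxeterSystem M W} {β : B → ℝ} (h : IsRt cs β) (u : W) :
    IsRt cs (rho cs u β) := by
  obtain ⟨w, i, rfl⟩ := h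
  exact ⟨u * w, i, (rho_mul cs u w _).symm⟩

lemma IsRt.neg {cs : CoxeterSystem M W} {β : B → ℝ} (h : IsRt cs β) : IsRt cs (-β) := by
  obtain ⟨w, i, rfl⟩ := h
  exact ⟨w * cs.simple i, i, by rw [rho_mul, rho_simple, gs_sr_self, map_neg]⟩

lemma IsRt.sr (cs : CoxeterSystem M W) (i : B) : IsRt cs (sr i) := ⟨1, i, by simp⟩

lemma IsRt.Q_eq {cs : CoxeterSystem M W} {β : B → ℝ} (h : IsRt cs β) : Q M β = 2 := by
  obtain ⟨w, i, rfl⟩ := h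
  rw [Q_rho, Q_sr]

lemma IsRt.ne_zero {cs : CoxeterSystem M W} {β : B → ℝ} (h : IsRt cs β) : β ≠ 0 := by
  rintro rfl
  have := h.Q_eq
  simp [Q] at this

lemma IsRt.trichotomy {cs : CoxeterSystem M W} {β : B → ℝ} (h : IsRt cs β) : 0 ≤ β ∨ β ≤ 0 := by
  obtain ⟨w, i, rfl⟩ := h
  rcases lt_or_gt_of_ne (cs.length_mul_simple_ne w i) with h | h
  · exact Or.inr (rho_nonpos cs w i h)
  · exact Or.inl (rho_nonneg cs _ w i rfl h)

lemma IsRt.simple_pos {cs : CoxeterSystem M W} {β : B → ℝ} (h : IsRt cs β) (hp : 0 ≤ β) (i : B)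
    (hne : β ≠ GeomRep.sr i) : 0 ≤ gs M i β := by
  have hr : IsRt cs (gs M i β) := by rw [← rho_simple cs]; exact h.rho _
  rcases hr.trichotomy with h1 | h1
  · exact h1
  exfalso
  apply hne
  have hβ : β = β i • (GeomRep.sr i : B → ℝ) := by
    ext j
    by_cases hj : j = i
    · subst hj; simp [GeomRep.sr]
    · have h2 := h1 j
      have h3 := hp j
      simp [gs_apply, GeomRep.sr, hj] at h2 h3 ⊢
      linarith
  have hq := h.Q_eq
  rw [hβ, Q_smul, Q_sr] at hq
  have h3 : 0 ≤ β i := hp i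
  have : β i = 1 := by nlinarith
  rw [hβ, this, one_smul]

lemma finite_inv (cs : CoxeterSystem M W) (w : W) :
    {β | IsRt cs β ∧ 0 ≤ β ∧ ¬ 0 ≤ rho cs w β}.Finite := by
  induction w using cs.simple_induction_left with
  | one => 
    convert Set.finite_empty
    ext β
    simp +contextual
  | mul_simple_left w i h =>
    apply (h.union (Set.finite_singleton (rho cs w⁻¹ (sr i)))).subset
    rintro β ⟨h1, h2, h3⟩
    by_cases h4 : 0 ≤ rho cs w β
    · right
      rw [rho_mul, rho_simple] at h3
      have : rho cs w β = sr i := by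
        by_contra hne
        exact h3 ((h1.rho w).simple_pos h4 i hne)
      rw [← this, rho_inv_self]
      rfl
    · left; exact ⟨h1, h2, h4⟩

lemma dominate (cs : CoxeterSystem M W) (n : ℕ) : ∀ (y : (B → ℝ) →ₗ[ℝ] ℝ),
    {β | IsRt cs β ∧ 0 ≤ β ∧ y β < 0}.Finite →
    {β | IsRt cs β ∧ 0 ≤ β ∧ y β < 0}.ncard = n →
    ∃ w, ∀ i, 0 ≤ y (rho cs w (sr i)) := by
  induction n using Nat.strong_induction_on with
  | _ n IH =>
  intro y hf hn
  by_cases hy : ∀ i, 0 ≤ y (sr i)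
  · exact ⟨1, by simpa using hy⟩
  push Not at hy
  obtain ⟨i, hi⟩ := hy
  set N := {β | IsRt cs β ∧ 0 ≤ β ∧ y β < 0} with hN
  have hsub : {β | IsRt cs β ∧ 0 ≤ β ∧ (y.comp (gs M i)) β < 0} ⊆ gs M i '' (N \ {sr i}) := by
    rintro β ⟨h1, h2, h3⟩
    refine ⟨gs M i β, ⟨⟨?_, ?_, h3⟩, ?_⟩, gs_gs i β⟩
    · rw [← rho_simple cs]; exact h1.rho _
    · apply h1.simple_pos h2
      rintro rfl
      rw [LinearMap.comp_apply, gs_sr_self, map_neg] at h3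
      linarith
    · intro h
      have h5 : gs M i (gs M i β) = gs M i (sr i) := by rw [h]
      rw [gs_gs, gs_sr_self] at h5
      rw [h5] at h2
      have := h2 i
      simp [sr] at this
      linarith
  have hfin' : (gs M i '' (N \ {sr i})).Finite := (hf.subset Set.diff_subset).image _
  have hlt : {β | IsRt cs β ∧ 0 ≤ β ∧ (y.comp (gs M i)) β < 0}.ncard < n := by
    calc _ ≤ (gs M i '' (N \ {sr i})).ncard := Set.ncard_le_ncard hsub hfin'
      _ ≤ (N \ {sr i}).ncard := Set.ncard_image_le (hf.subset Set.diff_subset)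
      _ < N.ncard := Set.ncard_diff_singleton_lt_of_mem ⟨IsRt.sr cs i, sr_nonneg i, hi⟩ hf
      _ = n := hn
  obtain ⟨w, hw⟩ := IH _ hlt (y.comp (gs M i)) (hfin'.subset hsub) rfl
  refine ⟨cs.simple i * w, fun j => ?_⟩
  rw [rho_mul, rho_simple]
  exact hw j

lemma generic (A : Set (B → ℝ)) (hA : A.Finite) (h0 : ∀ a ∈ A, a ≠ 0) :
    ∃ x : B → ℝ, (∀ i, 0 < x i) ∧ ∀ a ∈ A, x ⬝ᵥ a ≠ 0 := by
  let e := Fintype.equivFin B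
  let p : (B → ℝ) → Polynomial ℝ := fun a => ∑ i, Polynomial.monomial (e i : ℕ) (a i)
  have hp : ∀ a ∈ A, p a ≠ 0 := by
    intro a ha hpa
    apply h0 a ha
    ext i
    have : (p a).coeff (e i) = a i := by
      simp only [p, Polynomial.finset_sum_coeff, Polynomial.coeff_monomial]
      rw [Finset.sum_eq_single i]
      · simp
      · intro j _ hj
        rw [if_neg]
        intro h
        exact hj (e.injective (Fin.ext h))
      · simp
    rw [← this, hpa]; simp
  have hfin : (⋃ a ∈ A, {τ | (p a).IsRoot τ}).Finite :=
    hA.biUnion fun a ha => Polynomial.finite_setOf_isRoot (hp a ha)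
  obtain ⟨τ, hτ, hτ'⟩ := ((Set.Ioi_infinite (0:ℝ)).diff hfin).nonempty
  refine ⟨fun i => τ ^ (e i : ℕ), fun i => pow_pos hτ _, fun a ha h => hτ' ?_⟩
  simp only [Set.mem_iUnion]
  refine ⟨a, ha, ?_⟩
  change (p a).eval τ = 0
  rw [← h]
  simp [p, Polynomial.eval_finset_sum, dotProduct, mul_comm]

lemma dom_nonneg (y : (B → ℝ) →ₗ[ℝ] ℝ) (hy : ∀ i, 0 ≤ y (sr i)) (v : B → ℝ) (hv : 0 ≤ v) :
    0 ≤ y v := by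
  have : v = ∑ i, v i • (sr i : B → ℝ) := by
    ext j; simp [sr, Finset.sum_apply, Pi.single_apply]
  rw [this, map_sum]
  exact Finset.sum_nonneg fun i _ => by rw [map_smul]; exact mul_nonneg (hv i) (hy i)

lemma descent_mem (cs : CoxeterSystem M W) (y : (B → ℝ) →ₗ[ℝ] ℝ) (hy : ∀ i, 0 ≤ y (sr i))
    (v : W) (hv : ∀ z, y (rho cs v z) = y z) (i : B) (hi : cs.IsRightDescent v i) :
    y (sr i) = 0 := by
  have h1 := rho_nonpos cs v i hi
  have h2 := dom_nonneg y hy (-(rho cs v (sr i))) (by simpa using h1)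
  rw [map_neg, hv] at h2
  linarith [hy i]

lemma stab_mem (cs : CoxeterSystem M W) (y : (B → ℝ) →ₗ[ℝ] ℝ) (hy : ∀ i, 0 ≤ y (sr i)) (n : ℕ) :
    ∀ v : W, cs.length v = n → (∀ z, y (rho cs v z) = y z) →
      v ∈ Subgroup.closure (cs.simple '' {i | y (sr i) = 0}) := by
  induction n using Nat.strong_induction_on with
  | _ n IH =>
  intro v hn hv
  by_cases h1 : v = 1
  · rw [h1]; exact one_mem _
  obtain ⟨i, hi⟩ := cs.exists_rightDescent_of_ne_one h1
  have hJ := descent_mem cs y hy v hv i hi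
  have := IH _ (by rw [← hn]; exact hi) (v * cs.simple i) rfl (by
    intro z
    rw [rho_mul, hv, rho_simple, gs_apply, map_sub, map_smul, hJ]; simp)
  have h3 : cs.simple i ∈ Subgroup.closure (cs.simple '' {i | y (sr i) = 0}) :=
    Subgroup.subset_closure ⟨i, hJ, rfl⟩
  have h4 := mul_mem this h3
  simpa using h4

lemma closure_stab (cs : CoxeterSystem M W) (y : (B → ℝ) →ₗ[ℝ] ℝ) (v : W)
    (hv : v ∈ Subgroup.closure (cs.simple '' {i | y (sr i) = 0})) :
    ∀ z, y (rho cs v z) = y z := by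
  induction hv using Subgroup.closure_induction with
  | mem x hx =>
    obtain ⟨i, hi, rfl⟩ := hx
    intro z
    have hi : y (sr i) = 0 := hi
    rw [rho_simple, gs_apply, map_sub, map_smul, hi]; simp
  | one => simp
  | mul a b _ _ ha hb => intro z; rw [rho_mul, ha, hb]
  | inv a _ ha => intro z; rw [← ha, rho_self_inv]

lemma stab_finite (cs : CoxeterSystem M W) (y : (B → ℝ) →ₗ[ℝ] ℝ) (hy : ∀ i, 0 ≤ y (sr i))
    (hfin : {β | IsRt cs β ∧ y β = 0}.Finite) :
    (Subgroup.closure (cs.simple '' {i | y (sr i) = 0}) : Set W).Finite := by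
  let f : W → ({i | y (sr i) = 0} → (B → ℝ)) := fun v i => rho cs v (sr i.1)
  have hpi : {g : {i | y (sr i) = 0} → (B → ℝ) | ∀ i, g i ∈ {β | IsRt cs β ∧ y β = 0}}.Finite :=
    Set.Finite.pi' fun _ => hfin
  refine Set.Finite.of_injOn (f := f) ?_ ?_ hpi
  · intro v hv i
    refine ⟨⟨v, i.1, rfl⟩, ?_⟩
    change y (rho cs v (sr i.1)) = 0
    rw [closure_stab cs y v hv]; exact i.2
  · intro v hv u hu huv
    have hm : u⁻¹ * v ∈ Subgroup.closure (cs.simple '' {i | y (sr i) = 0}) :=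
      mul_mem (inv_mem hu) hv
    by_contra hne
    have h1 : u⁻¹ * v ≠ 1 := by
      intro h; apply hne; rw [inv_mul_eq_one] at h; exact h.symm
    obtain ⟨i, hi⟩ := cs.exists_rightDescent_of_ne_one h1
    have hJ := descent_mem cs y hy _ (closure_stab cs y _ hm) i hi
    have h2 := rho_nonpos cs _ i hi
    have h3 : rho cs v (sr i) = rho cs u (sr i) := congrFun huv ⟨i, hJ⟩
    rw [rho_mul, h3, rho_inv_self] at h2
    have := h2 i
    simp [sr] at this
    linarith

lemma refl_apply (cs : CoxeterSystem M W) {s : W} (hs : cs.IsReflection s) :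
    ∃ α : B → ℝ, ∀ v, rho cs s v - v ∈ Submodule.span ℝ {α} := by
  obtain ⟨w, i, rfl⟩ := hs
  refine ⟨rho cs w (sr i), fun v => ?_⟩
  rw [rho_mul, rho_mul, rho_simple, gs_apply, map_sub, map_smul, rho_self_inv,
    Submodule.mem_span_singleton]
  exact ⟨-gf M i (rho cs w⁻¹ v), by module⟩

theorem main (cs : CoxeterSystem M W) (s s' : W)
    (hs : cs.IsReflection s) (hs' : cs.IsReflection s')
    (hfin : (Subgroup.closure {s, s'} : Set W).Finite) :
    ∃ r r' : B, (Subgroup.closure {cs.simple r, cs.simple r'} : Set W).Finite ∧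
      ∃ w : W, (fun x => w * x * w⁻¹) '' (Subgroup.closure {s, s'} : Set W) ⊆
        (Subgroup.closure {cs.simple r, cs.simple r'} : Set W) := by
  obtain ⟨α, hα⟩ := refl_apply cs hs
  obtain ⟨α', hα'⟩ := refl_apply cs hs'
  set D := Subgroup.closure {s, s'} with hD
  set F := hfin.toFinset with hF
  have memF : ∀ d, d ∈ F ↔ d ∈ D := fun d => by simp [hF]
  have hspan : ∀ d ∈ D, ∀ v, rho cs d v - v ∈ Submodule.span ℝ {α, α'} := by
    intro d hd
    induction hd using Subgroup.closure_induction with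
    | mem x hx =>
      intro v
      rcases hx with rfl | hx
      · exact Submodule.span_mono (by simp) (hα v)
      · rw [Set.mem_singleton_iff] at hx
        subst hx
        exact Submodule.span_mono (by simp) (hα' v)
    | one => simp
    | mul a b _ _ ha hb =>
      intro v
      rw [rho_mul]
      have := add_mem (ha (rho cs b v)) (hb v)
      simpa using this
    | inv a _ ha =>
      intro v
      have := neg_mem (ha (rho cs a⁻¹ v))
      rw [rho_self_inv] at this
      simpa using this
  let S : (B → ℝ) →ₗ[ℝ] (B → ℝ) := ∑ d ∈ F, rho cs d
  have S_apply : ∀ v, S v = ∑ d ∈ F, rho cs d v := fun v => by simp [S]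
  have S_inv : ∀ d ∈ D, ∀ v, S (rho cs d v) = S v := by
    intro d hd v
    rw [S_apply, S_apply]
    refine Finset.sum_equiv (Equiv.mulRight d) ?_ ?_
    · intro g
      rw [memF, memF, Equiv.coe_mulRight, Subgroup.mul_mem_cancel_right _ hd]
    · intro g _
      rw [Equiv.coe_mulRight, rho_mul]
  have S_zero : ∀ v, S v = 0 → v ∈ Submodule.span ℝ {α, α'} := by
    intro v hv
    have h1 : ∑ d ∈ F, (rho cs d v - v) ∈ Submodule.span ℝ {α, α'} :=
      sum_mem fun d hd => hspan d ((memF d).1 hd) v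
    rw [Finset.sum_sub_distrib, ← S_apply, hv, zero_sub, Finset.sum_const, neg_mem_iff] at h1
    have hc : (F.card : ℝ) ≠ 0 := by
      have : (1 : W) ∈ F := (memF 1).2 (one_mem _)
      exact_mod_cast (Finset.card_pos.2 ⟨1, this⟩).ne'
    rw [← Nat.cast_smul_eq_nsmul ℝ] at h1
    exact (Submodule.smul_mem_iff _ hc).1 h1
  set Z : Set (B → ℝ) := ⋃ d ∈ F, {β | IsRt cs β ∧ 0 ≤ β ∧ ¬ 0 ≤ rho cs d β} with hZ
  have hZfin : Z.Finite := Set.Finite.biUnion F.finite_toSet fun d _ => finite_inv cs d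
  obtain ⟨x, hx, hxA⟩ := generic {a | a ∈ S '' Z ∧ a ≠ 0}
    ((hZfin.image S).subset fun a h => h.1) (fun a h => h.2)
  let xl : (B → ℝ) →ₗ[ℝ] ℝ := Fintype.linearCombination ℝ x
  have xl_apply : ∀ v, xl v = x ⬝ᵥ v := by
    intro v; simp [xl, Fintype.linearCombination_apply, dotProduct, mul_comm]
  let y := xl.comp S
  have y_apply : ∀ v, y v = x ⬝ᵥ S v := fun v => xl_apply _
  have xpos : ∀ v : B → ℝ, 0 ≤ v → v ≠ 0 → 0 < x ⬝ᵥ v := by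
    intro v hv hne
    obtain ⟨i, hi⟩ := Function.ne_iff.1 hne
    exact Finset.sum_pos' (fun j _ => mul_nonneg (hx j).le (hv j))
      ⟨i, Finset.mem_univ _, mul_pos (hx i) (lt_of_le_of_ne (hv i) (Ne.symm hi))⟩
  have y_pos : ∀ β, IsRt cs β → 0 ≤ β → β ∉ Z → 0 < y β := by
    intro β h1 h2 h3
    have h4 : ∀ d ∈ F, 0 ≤ rho cs d β := by
      intro d hd
      by_contra hcon
      exact h3 (Set.mem_biUnion hd ⟨h1, h2, hcon⟩)
    rw [y_apply, S_apply]
    rw [dotProduct_sum]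
    exact Finset.sum_pos (fun d hd => xpos _ (h4 d hd) (h1.rho d).ne_zero)
      ⟨1, (memF 1).2 (one_mem _)⟩
  have y_zero_pos : ∀ β, IsRt cs β → 0 ≤ β → y β = 0 → S β = 0 ∧ β ∈ Z := by
    intro β h1 h2 h3
    have hz : β ∈ Z := by
      by_contra h; exact (y_pos β h1 h2 h).ne' h3
    refine ⟨?_, hz⟩
    by_contra hne
    exact hxA (S β) ⟨⟨β, hz, rfl⟩, hne⟩ (by rw [← y_apply, h3])
  have y_zero : ∀ β, IsRt cs β → y β = 0 → S β = 0 ∧ (β ∈ Z ∨ -β ∈ Z) := by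
    intro β h1 h3
    rcases h1.trichotomy with h | h
    · have := y_zero_pos β h1 h h3
      exact ⟨this.1, Or.inl this.2⟩
    · have := y_zero_pos (-β) h1.neg (by simpa using h) (by rw [map_neg, h3, neg_zero])
      refine ⟨by simpa using this.1, Or.inr this.2⟩
  obtain ⟨w, hw⟩ := dominate cs _ y (hZfin.subset (by
    rintro β ⟨h1, h2, h3⟩
    by_contra hcon
    linarith [y_pos β h1 h2 hcon])) rfl
  let y0 := y.comp (rho cs w)
  have hy0 : ∀ i, 0 ≤ y0 (sr i) := hw
  have hfin0 : {β | IsRt cs β ∧ y0 β = 0}.Finite := by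
    have hZ2 : {β | β ∈ Z ∨ -β ∈ Z}.Finite := by
      apply (hZfin.union (hZfin.image Neg.neg)).subset
      rintro β (h | h)
      · exact Or.inl h
      · exact Or.inr ⟨-β, h, neg_neg β⟩
    apply (hZ2.image (rho cs w⁻¹)).subset
    rintro β ⟨h1, h2⟩
    exact ⟨rho cs w β, (y_zero _ (h1.rho w) h2).2, rho_inv_self cs w β⟩
  have hJfin := stab_finite cs y0 hy0 hfin0
  set J : Set B := {i | y0 (sr i) = 0} with hJ
  have hconj : ∀ d ∈ D, w⁻¹ * d * w⁻¹⁻¹ ∈ Subgroup.closure (cs.simple '' J) := by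
    intro d hd
    apply stab_mem cs y0 hy0 _ _ rfl
    intro z
    change y (rho cs w (rho cs _ z)) = y (rho cs w z)
    rw [inv_inv, mul_assoc, rho_mul, rho_self_inv, rho_mul, y_apply, S_inv d hd, ← y_apply]
  have hcard : J.ncard ≤ 2 := by
    have hli : LinearIndependent ℝ (fun i : J => rho cs w (sr i.1)) := by
      have h1 : LinearIndependent ℝ (fun i : B => (sr i : B → ℝ)) := by
        have := (Pi.basisFun ℝ B).linearIndependent
        convert this with i
        simp [sr]
      have h2 := h1.map' (rho cs w) (by
        rw [LinearMap.ker_eq_bot]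
        exact Function.LeftInverse.injective (rho_inv_self cs w))
      exact h2.comp (fun i : J => i.1) Subtype.val_injective
    have hsub : Set.range (fun i : J => rho cs w (sr i.1)) ≤
        (Submodule.span ℝ (({α, α'} : Finset (B → ℝ)) : Set (B → ℝ)) : Set (B → ℝ)) := by
      rintro _ ⟨i, rfl⟩
      have := S_zero _ (y_zero _ ⟨w, i.1, rfl⟩ i.2).1
      simpa using this
    have hle := linearIndependent_le_span' _ hli _ hsub
    have h2 : Cardinal.mk J ≤ (2 : ℕ) := hle.trans (by
      rw [← Nat.card_eq_fintype_card, Nat.card_coe_set_eq, Set.ncard_coe_finset]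
      exact_mod_cast Finset.card_le_two)
    rw [← Set.cast_ncard J.toFinite] at h2
    exact_mod_cast h2
  obtain ⟨r, r', hrr⟩ : ∃ r r', J = {r, r'} := by
    rcases Nat.lt_or_ge J.ncard 2 with h | h
    · rcases Nat.lt_or_ge J.ncard 1 with h | h
      · exfalso
        have hJ0 : J = ∅ := (Set.ncard_eq_zero J.toFinite).1 (by omega)
        have := hconj s (Subgroup.subset_closure (by simp))
        rw [hJ0] at this
        simp at this
        have h5 := hs.odd_length
        have h6 : s = 1 := by
          have := congrArg (fun g => w * g * w⁻¹) this
          simpa [mul_assoc] using this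
        rw [h6] at h5
        simp at h5
      · obtain ⟨a, ha⟩ := Set.ncard_eq_one.1 (show J.ncard = 1 by omega)
        exact ⟨a, a, by simp [ha]⟩
    · obtain ⟨a, b, -, hab⟩ := Set.ncard_eq_two.1 (show J.ncard = 2 by omega)
      exact ⟨a, b, hab⟩
  rw [hrr, Set.image_pair] at hJfin hconj
  refine ⟨r, r', hJfin, w⁻¹, ?_⟩
  rintro _ ⟨d, hd, rfl⟩
  exact hconj d hd

end
end GeomRep

/-- Every finite subgroup of a Coxeter group generated by two reflections
is conjugate into a finite standard parabolic subgroup of rank two. -/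
theorem finite_dihedral_reflection_subgroup_conjugate_into_parabolic
    [Finite B] (cs : CoxeterSystem M W) (s s' : W)
    (hs : cs.IsReflection s) (hs' : cs.IsReflection s')
    (hfin : (Subgroup.closure {s, s'} : Set W).Finite) :
    ∃ r r' : B, (Subgroup.closure {cs.simple r, cs.simple r'} : Set W).Finite ∧
      ∃ w : W, (fun x => w * x * w⁻¹) '' (Subgroup.closure {s, s'} : Set W) ⊆
        (Subgroup.closure {cs.simple r, cs.simple r'} : Set W) := by
  classical
  cases nonempty_fintype B
  exact GeomRep.main cs s s' hs hs' hfin
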